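/- Let n be a nonzero integer, let f be as follows: f(y) = (8·σ₂(|n|)/(9π|n|³)) · ( q⁰(π|n|y)·K₀(2π|n|y) + q¹(π|n|y)·K₁(2π|n|y) ) with q⁰(z) = (90ζ(3) − n²π⁴ + 9z²ζ(3))/z and q¹(z) = (90ζ(3) − n²π⁴ + 54z²ζ(3))/z², and set α = 64·σ₂(|n|)·(n²π⁴ − 90ζ(3)) / (135·|n|^{5/2}·π). Then the function g(y) = f(y) + α·√y·K_{7/2}(2π|n|y) satisfies: g(y) − 4π²σ₂(|n|)/(15·n²·y) remains bounded as y → 0⁺. -/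

import Mathlib

open Real

/-- Riemann zeta function for real arguments `s > 1`, as a sum. -/
noncomputable def zetaR (s : ℝ) : ℝ := ∑' n : ℕ, 1 / ((n : ℝ) + 1) ^ s

/-- Modified Bessel function `K₀`. -/
noncomputable def K0 (x : ℝ) : ℝ := ∫ t in Set.Ioi (0 : ℝ), Real.exp (-x * Real.cosh t)

/-- Modified Bessel function `K₁`. -/
noncomputable def K1 (x : ℝ) : ℝ :=
  ∫ t in Set.Ioi (0 : ℝ), Real.exp (-x * Real.cosh t) * Real.cosh t

/-- Divisor sum `σ₂(m) = ∑_{d ∣ m} d²`. -/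
def sigma2 (m : ℕ) : ℕ := ∑ d ∈ m.divisors, d ^ 2

/-- The coefficient `q⁰`. -/
noncomputable def q0 (n : ℤ) (z : ℝ) : ℝ :=
  (90 * zetaR 3 - (n : ℝ) ^ 2 * π ^ 4 + 9 * z ^ 2 * zetaR 3) / z

/-- The coefficient `q¹`. -/
noncomputable def q1 (n : ℤ) (z : ℝ) : ℝ :=
  (90 * zetaR 3 - (n : ℝ) ^ 2 * π ^ 4 + 54 * z ^ 2 * zetaR 3) / z ^ 2

/-- The particular solution `f̂^P_{n,0}`. -/
noncomputable def fP (n : ℤ) (y : ℝ) : ℝ :=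
  8 * (sigma2 n.natAbs : ℝ) / (9 * π * |(n : ℝ)| ^ 3) *
    (q0 n (π * |(n : ℝ)| * y) * K0 (2 * π * |(n : ℝ)| * y) +
      q1 n (π * |(n : ℝ)| * y) * K1 (2 * π * |(n : ℝ)| * y))


/-- Modified Bessel function `K_{7/2}`. -/
noncomputable def K7half (x : ℝ) : ℝ :=
  Real.sqrt (π / (2 * x)) * (1 + 6 / x + 15 / x ^ 2 + 15 / x ^ 3) * Real.exp (-x)

/-- The homogeneous-solution coefficient `α_{n,0}`. -/
noncomputable def alphaN0 (n : ℤ) : ℝ :=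
  64 * (sigma2 n.natAbs : ℝ) * ((n : ℝ) ^ 2 * π ^ 4 - 90 * zetaR 3) /
    (135 * |(n : ℝ)| ^ ((5 : ℝ) / 2) * π)

/-!
The whole estimate rests on the behaviour of `K₂` at `0⁺`. With `x = 2π|n|y`, the recurrence
`K₂ = K₀ + (2/x) K₁` absorbs the most singular part of the particular solution into `(2/x) K₂(x)`,
and writing `cosh 2t = sinh 2t + e^{-2t}` in the integral for `K₂` gives
`K₂(x) = 2/x² - 1/2 + O(x)`: the `sinh` part is elementary and the `e^{-2t}` part tends to `1/2`.
The same recurrence then yields `x K₀(x) = O(1)` and `K₁(x) = 1/x + O(1)`. The coefficient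
`α_{n,0}` is the one for which the `x⁻³` terms cancel, and what is left of order `x⁻¹` is free
of `ζ(3)`.
-/

open Set Filter Topology Asymptotics MeasureTheory

section BesselK

/-- The modified Bessel function of the second kind `K_ν` on `x > 0`, for real order `ν`, by its
integral representation; `K0` and `K1` are the cases `ν = 0` and `ν = 1`. -/
noncomputable def besselK (ν x : ℝ) : ℝ :=
  ∫ t in Ioi (0 : ℝ), exp (-x * cosh t) * cosh (ν * t)

theorem K0_eq_besselK (x : ℝ) : K0 x = besselK 0 x := by
  simp [K0, besselK]

theorem K1_eq_besselK (x : ℝ) : K1 x = besselK 1 x := by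
  simp [K1, besselK]

variable {x : ℝ}

theorem exp_neg_mul_cosh_isBigO_exp_mul (hx : 0 < x) (b : ℝ) :
    (fun t => exp (-x * cosh t)) =O[atTop] fun t => exp (b * t) := by
  refine isBigO_exp_comp_exp_comp.2 (isBoundedUnder_of_eventually_le (a := 0) ?_)
  filter_upwards [eventually_gt_atTop 0,
    (tendsto_exp_div_pow_atTop 1).eventually_ge_atTop (-(2 * b / x))] with t ht hb
  have hexp : -(2 * b) * t ≤ x * exp t := by
    rw [pow_one, le_div_iff₀ ht] at hb
    calc -(2 * b) * t = x * (-(2 * b / x) * t) := by field_simp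
      _ ≤ x * exp t := by gcongr
  have hcosh : x * exp t ≤ 2 * (x * cosh t) := by
    rw [cosh_eq]
    nlinarith [mul_pos hx (exp_pos (-t))]
  simp only [Pi.sub_apply]
  linarith

theorem exp_neg_mul_cosh_mul_exp_isBigO (hx : 0 < x) (a : ℝ) :
    (fun t => exp (-x * cosh t) * exp (a * t)) =O[atTop] fun t => exp (-1 * t) := by
  refine ((exp_neg_mul_cosh_isBigO_exp_mul hx (-(a + 1))).mul (isBigO_refl _ _)).congr_right
    fun t => ?_
  rw [← exp_add]
  ring_nf

theorem integrableOn_exp_neg_mul_cosh_mul_exp (hx : 0 < x) (a : ℝ) :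
    IntegrableOn (fun t => exp (-x * cosh t) * exp (a * t)) (Ioi 0) :=
  integrable_of_isBigO_exp_neg one_pos
    (by have := continuous_cosh; fun_prop) (exp_neg_mul_cosh_mul_exp_isBigO hx a)

theorem tendsto_exp_neg_mul_cosh_mul_exp (hx : 0 < x) (a : ℝ) :
    Tendsto (fun t => exp (-x * cosh t) * exp (a * t)) atTop (𝓝 0) :=
  (exp_neg_mul_cosh_mul_exp_isBigO hx a).trans_tendsto <| by
    simpa using tendsto_exp_neg_atTop_nhds_zero

theorem integrableOn_exp_neg_mul_cosh_mul_cosh (hx : 0 < x) (ν : ℝ) :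
    IntegrableOn (fun t => exp (-x * cosh t) * cosh (ν * t)) (Ioi 0) := by
  refine (((integrableOn_exp_neg_mul_cosh_mul_exp hx ν).add
    (integrableOn_exp_neg_mul_cosh_mul_exp hx (-ν))).div_const 2).congr (.of_forall fun t => ?_)
  simp only [Pi.add_apply, cosh_eq (ν * t), neg_mul]
  ring

theorem integrableOn_exp_neg_mul_cosh_mul_sinh (hx : 0 < x) (ν : ℝ) :
    IntegrableOn (fun t => exp (-x * cosh t) * sinh (ν * t)) (Ioi 0) := by
  refine ((integrableOn_exp_neg_mul_cosh_mul_exp hx ν).sub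
    (integrableOn_exp_neg_mul_cosh_mul_cosh hx ν)).congr (.of_forall fun t => ?_)
  simp only [Pi.sub_apply, ← mul_sub, exp_sub_cosh]

theorem tendsto_exp_neg_mul_cosh_mul_cosh (hx : 0 < x) (ν : ℝ) :
    Tendsto (fun t => exp (-x * cosh t) * cosh (ν * t)) atTop (𝓝 0) := by
  have h := ((tendsto_exp_neg_mul_cosh_mul_exp hx ν).add
    (tendsto_exp_neg_mul_cosh_mul_exp hx (-ν))).div_const 2
  rw [add_zero, zero_div] at h
  refine h.congr fun t => ?_
  rw [cosh_eq (ν * t), neg_mul ν t]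
  ring

theorem tendsto_exp_neg_mul_cosh_mul_sinh (hx : 0 < x) (ν : ℝ) :
    Tendsto (fun t => exp (-x * cosh t) * sinh (ν * t)) atTop (𝓝 0) := by
  have h := (tendsto_exp_neg_mul_cosh_mul_exp hx ν).sub (tendsto_exp_neg_mul_cosh_mul_cosh hx ν)
  rw [sub_zero] at h
  refine h.congr fun t => ?_
  rw [← mul_sub, exp_sub_cosh]

theorem besselK_nonneg (ν x : ℝ) : 0 ≤ besselK ν x :=
  integral_nonneg fun _ => mul_nonneg (exp_pos _).le (cosh_pos _).le

theorem hasDerivAt_exp_neg_mul_cosh_mul_sinh (x ν t : ℝ) :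
    HasDerivAt (fun t => exp (-x * cosh t) * sinh (ν * t))
      (ν * (exp (-x * cosh t) * cosh (ν * t)) -
        x / 2 * (exp (-x * cosh t) * cosh ((ν + 1) * t) -
          exp (-x * cosh t) * cosh ((ν - 1) * t))) t := by
  refine (((hasDerivAt_cosh t).const_mul (-x)).exp.mul
    ((hasDerivAt_id t).const_mul ν).sinh).congr_deriv ?_
  rw [show (ν + 1) * t = ν * t + t by ring, show (ν - 1) * t = ν * t - t by ring,
    cosh_add, cosh_sub]
  simp only [id]
  ring

theorem besselK_add_one_sub_besselK_sub_one (hx : 0 < x) (ν : ℝ) :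
    besselK (ν + 1) x - besselK (ν - 1) x = 2 * ν / x * besselK ν x := by
  have hint := integrableOn_exp_neg_mul_cosh_mul_cosh hx
  have hdiff : IntegrableOn (fun t => x / 2 * (exp (-x * cosh t) * cosh ((ν + 1) * t) -
      exp (-x * cosh t) * cosh ((ν - 1) * t))) (Ioi 0) :=
    ((hint (ν + 1)).sub (hint (ν - 1))).const_mul (x / 2)
  have hftc := integral_Ioi_of_hasDerivAt_of_tendsto' (a := 0)
    (fun t _ => hasDerivAt_exp_neg_mul_cosh_mul_sinh x ν t)
    (((hint ν).const_mul ν).sub hdiff) (tendsto_exp_neg_mul_cosh_mul_sinh hx ν)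
  have hlin : ∫ t in Ioi (0 : ℝ), (ν * (exp (-x * cosh t) * cosh (ν * t)) -
        x / 2 * (exp (-x * cosh t) * cosh ((ν + 1) * t) -
          exp (-x * cosh t) * cosh ((ν - 1) * t))) =
      ν * besselK ν x - x / 2 * (besselK (ν + 1) x - besselK (ν - 1) x) := by
    rw [integral_sub ((hint ν).const_mul ν) hdiff, integral_const_mul, integral_const_mul,
      integral_sub (hint (ν + 1)) (hint (ν - 1))]
    rfl
  rw [hlin, mul_zero, sinh_zero, mul_zero, sub_zero] at hftc
  field_simp
  linarith

theorem besselK_two (hx : 0 < x) : besselK 2 x = besselK 0 x + 2 / x * besselK 1 x := by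
  have h := besselK_add_one_sub_besselK_sub_one hx 1
  rw [one_add_one_eq_two, sub_self, mul_one] at h
  linarith

theorem besselK_le_besselK (hx : 0 < x) {μ ν : ℝ} (h : |μ| ≤ |ν|) : besselK μ x ≤ besselK ν x := by
  refine integral_mono (integrableOn_exp_neg_mul_cosh_mul_cosh hx μ)
    (integrableOn_exp_neg_mul_cosh_mul_cosh hx ν) fun t => ?_
  refine mul_le_mul_of_nonneg_left (cosh_le_cosh.2 ?_) (exp_pos _).le
  rw [abs_mul, abs_mul]
  gcongr

theorem besselK_eq_integral_sinh_add_integral_exp (hx : 0 < x) (ν : ℝ) :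
    besselK ν x = (∫ t in Ioi (0 : ℝ), exp (-x * cosh t) * sinh (ν * t)) +
      ∫ t in Ioi (0 : ℝ), exp (-x * cosh t) * exp (-ν * t) := by
  rw [← integral_add (integrableOn_exp_neg_mul_cosh_mul_sinh hx ν)
    (integrableOn_exp_neg_mul_cosh_mul_exp hx (-ν)), besselK]
  simp only [← mul_add, neg_mul ν, ← cosh_sub_sinh (ν * _), add_sub_cancel]

theorem integral_exp_neg_mul_cosh_mul_sinh_two_mul (hx : 0 < x) :
    ∫ t in Ioi (0 : ℝ), exp (-x * cosh t) * sinh (2 * t) = 2 * (1 + x) * exp (-x) / x ^ 2 := by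
  have hderiv (t : ℝ) : HasDerivAt
      (fun t => -2 / x ^ 2 * (x * (exp (-x * cosh t) * cosh t) + exp (-x * cosh t)))
      (exp (-x * cosh t) * sinh (2 * t)) t := by
    have hexp := ((hasDerivAt_cosh t).const_mul (-x)).exp
    refine ((((hexp.mul (hasDerivAt_cosh t)).const_mul x).add hexp).const_mul
      (-2 / x ^ 2)).congr_deriv ?_
    rw [sinh_two_mul]
    field_simp
    ring
  have hlim : Tendsto
      (fun t => -2 / x ^ 2 * (x * (exp (-x * cosh t) * cosh t) + exp (-x * cosh t)))
      atTop (𝓝 0) := by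
    have h₀ := tendsto_exp_neg_mul_cosh_mul_cosh hx 0
    have h₁ := tendsto_exp_neg_mul_cosh_mul_cosh hx 1
    simp only [zero_mul, cosh_zero, mul_one, one_mul] at h₀ h₁
    simpa using ((h₁.const_mul x).add h₀).const_mul (-2 / x ^ 2)
  rw [integral_Ioi_of_hasDerivAt_of_tendsto' (fun t _ => hderiv t)
    (integrableOn_exp_neg_mul_cosh_mul_sinh hx 2) hlim]
  simp only [cosh_zero, mul_one]
  ring

theorem abs_exp_neg_mul_cosh_mul_exp_sub_le (hx : 0 ≤ x) (ν : ℝ) {t : ℝ} (ht : 0 ≤ t) :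
    |exp (-x * cosh t) * exp (-ν * t) - exp (-ν * t)| ≤ x * exp (-(ν - 1) * t) := by
  have hcosh : cosh t ≤ exp t := by
    rw [← cosh_add_sinh]
    linarith [sinh_nonneg_iff.2 ht]
  have hone : exp (-x * cosh t) ≤ 1 :=
    exp_le_one_iff.2 (mul_nonpos_of_nonpos_of_nonneg (neg_nonpos.2 hx) (cosh_pos t).le)
  calc |exp (-x * cosh t) * exp (-ν * t) - exp (-ν * t)|
      = (1 - exp (-x * cosh t)) * exp (-ν * t) := by
        rw [← sub_one_mul, abs_mul, abs_exp, abs_of_nonpos (sub_nonpos.2 hone), neg_sub]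
    _ ≤ x * cosh t * exp (-ν * t) := by
        gcongr
        linarith [add_one_le_exp (-x * cosh t)]
    _ ≤ x * exp t * exp (-ν * t) := by gcongr
    _ = x * exp (-(ν - 1) * t) := by
        rw [mul_assoc, ← exp_add]
        ring_nf

theorem abs_integral_exp_neg_mul_cosh_mul_exp_sub_le (hx : 0 < x) {ν : ℝ} (hν : 1 < ν) :
    |(∫ t in Ioi (0 : ℝ), exp (-x * cosh t) * exp (-ν * t)) - 1 / ν| ≤ x / (ν - 1) := by
  have hint (a : ℝ) (ha : 0 < a) : IntegrableOn (fun t => exp (-a * t)) (Ioi 0) :=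
    integrableOn_exp_mul_Ioi (neg_lt_zero.2 ha) 0
  have hval (a : ℝ) (ha : 0 < a) : ∫ t in Ioi (0 : ℝ), exp (-a * t) = 1 / a := by
    rw [integral_exp_mul_Ioi (neg_lt_zero.2 ha), mul_zero, exp_zero, neg_div_neg_eq]
  have hν₀ : 0 < ν := one_pos.trans hν
  have hν₁ : 0 < ν - 1 := sub_pos.2 hν
  rw [← hval ν hν₀, ← integral_sub (integrableOn_exp_neg_mul_cosh_mul_exp hx (-ν)) (hint ν hν₀),
    ← norm_eq_abs]
  calc ‖∫ t in Ioi (0 : ℝ), (exp (-x * cosh t) * exp (-ν * t) - exp (-ν * t))‖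
      ≤ ∫ t in Ioi (0 : ℝ), x * exp (-(ν - 1) * t) := by
        refine norm_integral_le_of_norm_le ((hint (ν - 1) hν₁).const_mul x) ?_
        filter_upwards [ae_restrict_mem measurableSet_Ioi] with t ht
        exact abs_exp_neg_mul_cosh_mul_exp_sub_le hx.le ν (mem_Ioi.1 ht).le
    _ = x / (ν - 1) := by rw [integral_const_mul, hval _ hν₁, mul_one_div]

end BesselK

section BoundedFunctions

variable {α : Type*}

theorem isBigO_one_of_continuous [TopologicalSpace α] {f : α → ℝ} (hf : Continuous f)
    (s : Set α) (a : α) : f =O[𝓝[s] a] (1 : α → ℝ) :=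
  hf.continuousWithinAt.tendsto.isBigO_one ℝ

theorem isBigO_one_mul {l : Filter α} {f g : α → ℝ} (hf : f =O[l] (1 : α → ℝ))
    (hg : g =O[l] (1 : α → ℝ)) : (fun x => f x * g x) =O[l] (1 : α → ℝ) :=
  (hf.mul hg).congr_right fun _ => one_mul 1

end BoundedFunctions

section SmallArgument

theorem exists_exp_neg_eq_add_pow_three_mul :
    ∃ ρ : ℝ → ℝ, ρ =O[𝓝[>] 0] (1 : ℝ → ℝ) ∧
      ∀ x > 0, exp (-x) = 1 - x + x ^ 2 / 2 + x ^ 3 * ρ x := by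
  refine ⟨fun x => (exp (-x) - (1 - x + x ^ 2 / 2)) / x ^ 3, ?_, fun x hx => by field_simp; ring⟩
  have hneg : Tendsto (fun x : ℝ => -x) (𝓝[>] 0) (𝓝 0) := by
    simpa using (continuous_neg.tendsto (0 : ℝ)).mono_left nhdsWithin_le_nhds
  have htaylor := ((exp_sub_sum_range_isBigO_pow 3).comp_tendsto hneg).mul
    (isBigO_refl (fun x : ℝ => (x ^ 3)⁻¹) _)
  refine (htaylor.congr_left fun x => ?_).trans (IsBigO.of_bound 1 ?_)
  · simp only [Function.comp_apply, Finset.sum_range_succ, Finset.sum_range_zero, Nat.factorial]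
    push_cast
    ring
  · filter_upwards [self_mem_nhdsWithin] with x (hx : 0 < x)
    simp [neg_pow x 3, hx.ne']

theorem besselK_two_sub_isBigO :
    (fun x => besselK 2 x - (2 / x ^ 2 - 1 / 2)) =O[𝓝[>] 0] fun x => x := by
  obtain ⟨ρ, hρ, hexp⟩ := exists_exp_neg_eq_add_pow_three_mul
  let R : ℝ → ℝ := fun x => ∫ t in Ioi (0 : ℝ), exp (-x * cosh t) * exp (-2 * t)
  have hR : (fun x => R x - 1 / 2) =O[𝓝[>] 0] fun x => x := by
    refine IsBigO.of_bound 1 ?_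
    filter_upwards [self_mem_nhdsWithin] with x (hx : 0 < x)
    refine (abs_integral_exp_neg_mul_cosh_mul_exp_sub_le hx one_lt_two).trans ?_
    norm_num [abs_of_pos hx]
  have hsinh : (fun x => (1 + 2 * (1 + x) * ρ x) * x) =O[𝓝[>] 0] fun x => x := by
    have hbdd : (fun x => 1 + 2 * (1 + x) * ρ x) =O[𝓝[>] 0] (1 : ℝ → ℝ) :=
      (isBigO_one_of_continuous continuous_const _ _).add
        (isBigO_one_mul (isBigO_one_of_continuous (by fun_prop) _ _) hρ)
    simpa using hbdd.mul (isBigO_refl (fun x : ℝ => x) _)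
  refine (hsinh.add hR).congr' ?_ .rfl
  filter_upwards [self_mem_nhdsWithin] with x (hx : 0 < x)
  rw [besselK_eq_integral_sinh_add_integral_exp hx, integral_exp_neg_mul_cosh_mul_sinh_two_mul hx,
    hexp x hx]
  simp only [R]
  field_simp
  ring

theorem mul_besselK_zero_isBigO : (fun x => x * besselK 0 x) =O[𝓝[>] 0] (1 : ℝ → ℝ) := by
  have hK₂ : (fun x => x ^ 2 * besselK 2 x) =O[𝓝[>] 0] (1 : ℝ → ℝ) := by
    have hpoly : (fun x => 2 - x ^ 2 / 2) =O[𝓝[>] 0] (1 : ℝ → ℝ) :=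
      isBigO_one_of_continuous (by fun_prop) _ _
    refine (hpoly.add (isBigO_one_mul (isBigO_one_of_continuous (continuous_pow 2) _ _)
      (besselK_two_sub_isBigO.trans (isBigO_one_of_continuous continuous_id _ _)))).congr' ?_ .rfl
    filter_upwards [self_mem_nhdsWithin] with x (hx : 0 < x)
    field_simp
    ring
  refine IsBigO.trans (IsBigO.of_bound 1 ?_) hK₂
  filter_upwards [self_mem_nhdsWithin] with x (hx : 0 < x)
  have hK₀ : 0 ≤ x * besselK 0 x := mul_nonneg hx.le (besselK_nonneg 0 x)
  have hK₀' : 0 ≤ x ^ 2 * besselK 0 x := mul_nonneg (sq_nonneg x) (besselK_nonneg 0 x)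
  have hK₀₁ : x * besselK 0 x ≤ x * besselK 1 x := by
    gcongr
    exact besselK_le_besselK hx (by simp)
  have hrec : x ^ 2 * besselK 2 x = x ^ 2 * besselK 0 x + 2 * (x * besselK 1 x) := by
    rw [besselK_two hx]
    field_simp
  rw [one_mul, norm_of_nonneg hK₀,
    norm_of_nonneg (mul_nonneg (sq_nonneg x) (besselK_nonneg 2 x)), hrec]
  linarith

theorem besselK_one_sub_isBigO : (fun x => besselK 1 x - 1 / x) =O[𝓝[>] 0] (1 : ℝ → ℝ) := by
  have hK₂ : (fun x => x / 2 * (besselK 2 x - (2 / x ^ 2 - 1 / 2))) =O[𝓝[>] 0] (1 : ℝ → ℝ) :=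
    isBigO_one_mul (isBigO_one_of_continuous (by fun_prop) _ _)
      (besselK_two_sub_isBigO.trans (isBigO_one_of_continuous continuous_id _ _))
  have hpoly : (fun x => -x / 4) =O[𝓝[>] 0] (1 : ℝ → ℝ) :=
    isBigO_one_of_continuous (by fun_prop) _ _
  refine ((hpoly.add hK₂).sub
    (mul_besselK_zero_isBigO.const_mul_left (1 / 2))).congr' ?_ .rfl
  filter_upwards [self_mem_nhdsWithin] with x (hx : 0 < x)
  rw [besselK_two hx]
  field_simp
  ring

theorem sqrt_mul_K7half {x : ℝ} (hx : 0 < x) :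
    √(2 * x / π) * K7half x = (1 + 6 / x + 15 / x ^ 2 + 15 / x ^ 3) * exp (-x) := by
  have hsqrt : √(2 * x / π) * √(π / (2 * x)) = 1 := by
    rw [← sqrt_mul (by positivity), div_mul_div_cancel₀ pi_ne_zero, div_self (by positivity),
      sqrt_one]
  rw [K7half, mul_assoc √(π / (2 * x)), ← mul_assoc, hsqrt, one_mul]

theorem sqrt_mul_K7half_sub_isBigO :
    (fun x => √(2 * x / π) * K7half x - (15 / x ^ 3 - 3 / (2 * x))) =O[𝓝[>] 0] (1 : ℝ → ℝ) := by
  obtain ⟨ρ, hρ, hexp⟩ := exists_exp_neg_eq_add_pow_three_mul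
  have hpoly : (fun x => 5 / 2 + 2 * x + x ^ 2 / 2) =O[𝓝[>] 0] (1 : ℝ → ℝ) :=
    isBigO_one_of_continuous (by fun_prop) _ _
  have hrem : (fun x => (x ^ 3 + 6 * x ^ 2 + 15 * x + 15) * ρ x) =O[𝓝[>] 0] (1 : ℝ → ℝ) :=
    isBigO_one_mul (isBigO_one_of_continuous (by fun_prop) _ _) hρ
  refine (hpoly.add hrem).congr' ?_ .rfl
  filter_upwards [self_mem_nhdsWithin] with x (hx : 0 < x)
  rw [sqrt_mul_K7half hx, hexp x hx]
  field_simp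
  ring

end SmallArgument

section Mode

/-- The factor `8σ₂(|n|) / (9π|n|³)` in front of the particular solution `fP n`. -/
noncomputable def modePrefactor (n : ℤ) : ℝ :=
  8 * (sigma2 n.natAbs : ℝ) / (9 * π * |(n : ℝ)| ^ 3)

/-- The common constant term `90ζ(3) - n²π⁴` of the numerators of `q0 n` and `q1 n`. -/
noncomputable def modeConst (n : ℤ) : ℝ :=
  90 * zetaR 3 - (n : ℝ) ^ 2 * π ^ 4

/-- The mode `fP n + alphaN0 n · √y · K_{7/2}` divided by `modePrefactor n`, as a function of
the Bessel argument `x = 2π|n|y`. -/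
noncomputable def rescaledMode (n : ℤ) (x : ℝ) : ℝ :=
  modeConst n * (2 / x * besselK 2 x) + 9 / 2 * zetaR 3 * (x * besselK 0 x) +
    54 * zetaR 3 * besselK 1 x - 4 / 15 * modeConst n * (√(2 * x / π) * K7half x)

variable {n : ℤ} {y : ℝ}

theorem fP_eq_modePrefactor_mul (hn : n ≠ 0) (hy : 0 < y) :
    fP n y = modePrefactor n *
      (modeConst n * (2 / (2 * π * |(n : ℝ)| * y) * besselK 2 (2 * π * |(n : ℝ)| * y)) +
        9 / 2 * zetaR 3 * (2 * π * |(n : ℝ)| * y * besselK 0 (2 * π * |(n : ℝ)| * y)) +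
        54 * zetaR 3 * besselK 1 (2 * π * |(n : ℝ)| * y)) := by
  have hx : 0 < 2 * π * |(n : ℝ)| * y := by positivity
  have hz : π * |(n : ℝ)| * y = 2 * π * |(n : ℝ)| * y / 2 := by ring
  rw [fP, q0, q1, K0_eq_besselK, K1_eq_besselK, besselK_two hx, hz, modePrefactor, modeConst]
  generalize 2 * π * |(n : ℝ)| * y = x at hx
  congr 1
  field_simp
  ring

theorem alphaN0_mul_sqrt_mul_K7half (hn : n ≠ 0) (hy : 0 < y) :
    alphaN0 n * √y * K7half (2 * π * |(n : ℝ)| * y) =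
      -(modePrefactor n * (4 / 15 * modeConst n *
        (√(2 * (2 * π * |(n : ℝ)| * y) / π) * K7half (2 * π * |(n : ℝ)| * y)))) := by
  have hN : 0 < |(n : ℝ)| := by positivity
  have hsqrt : √(2 * (2 * π * |(n : ℝ)| * y) / π) = 2 * √|(n : ℝ)| * √y := by
    rw [show 2 * (2 * π * |(n : ℝ)| * y) / π = 2 ^ 2 * |(n : ℝ)| * y by field_simp,
      sqrt_mul (by positivity), sqrt_mul (by positivity), sqrt_sq zero_le_two]
  have hpow : |(n : ℝ)| ^ ((5 : ℝ) / 2) = |(n : ℝ)| ^ 2 * √|(n : ℝ)| := by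
    rw [sqrt_eq_rpow, ← rpow_natCast, ← rpow_add hN]
    norm_num
  have hα : alphaN0 n = -(modePrefactor n * (4 / 15 * modeConst n)) * (2 * √|(n : ℝ)|) := by
    rw [alphaN0, modePrefactor, modeConst, hpow]
    field_simp
    rw [sq_sqrt hN.le]
    ring
  rw [hα, hsqrt]
  ring

theorem fP_add_alphaN0_mul_sqrt_mul_K7half (hn : n ≠ 0) (hy : 0 < y) :
    fP n y + alphaN0 n * √y * K7half (2 * π * |(n : ℝ)| * y) =
      modePrefactor n * rescaledMode n (2 * π * |(n : ℝ)| * y) := by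
  rw [fP_eq_modePrefactor_mul hn hy, alphaN0_mul_sqrt_mul_K7half hn hy, rescaledMode]
  ring

theorem modePrefactor_mul_div (hn : n ≠ 0) (y : ℝ) :
    modePrefactor n * (3 / 5 * (n : ℝ) ^ 2 * π ^ 4 / (2 * π * |(n : ℝ)| * y)) =
      4 * π ^ 2 * (sigma2 n.natAbs : ℝ) / (15 * (n : ℝ) ^ 2 * y) := by
  have hN : |(n : ℝ)| ≠ 0 := by positivity
  rw [modePrefactor, ← sq_abs (n : ℝ)]
  field_simp
  ring

theorem rescaledMode_sub_isBigO (n : ℤ) :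
    (fun x => rescaledMode n x - 3 / 5 * (n : ℝ) ^ 2 * π ^ 4 / x) =O[𝓝[>] 0] (1 : ℝ → ℝ) := by
  have hK₂ : (fun x => 2 / x * (besselK 2 x - (2 / x ^ 2 - 1 / 2))) =O[𝓝[>] 0] (1 : ℝ → ℝ) := by
    refine ((isBigO_refl (fun x : ℝ => 2 / x) _).mul besselK_two_sub_isBigO).trans
      (IsBigO.of_bound 2 ?_)
    filter_upwards [self_mem_nhdsWithin] with x (hx : 0 < x)
    simp [hx.ne']
  refine ((((hK₂.const_mul_left (modeConst n)).add
    (mul_besselK_zero_isBigO.const_mul_left (9 / 2 * zetaR 3))).add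
    (besselK_one_sub_isBigO.const_mul_left (54 * zetaR 3))).sub
    (sqrt_mul_K7half_sub_isBigO.const_mul_left (4 / 15 * modeConst n))).congr' ?_ .rfl
  filter_upwards [self_mem_nhdsWithin] with x (hx : 0 < x)
  rw [rescaledMode, modeConst]
  field_simp
  ring

end Mode

/-- after adding the homogeneous solution with coefficient `α_{n,0}`,
the mode `f̂_{n,0}` differs from `4π²σ₂(|n|)/(15 n² y)` by a bounded quantity as `y → 0⁺`. -/
theorem mode_n0_small_y (n : ℤ) (hn : n ≠ 0) :
    ∃ C : ℝ, ∀ᶠ y in nhdsWithin (0 : ℝ) (Set.Ioi 0),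
      |(fP n y + alphaN0 n * Real.sqrt y * K7half (2 * π * |(n : ℝ)| * y)) -
          4 * π ^ 2 * (sigma2 n.natAbs : ℝ) / (15 * (n : ℝ) ^ 2 * y)| ≤ C := by
  have hscale : 0 < 2 * π * |(n : ℝ)| := by positivity
  obtain ⟨C, hC⟩ := ((rescaledMode_sub_isBigO n).const_mul_left (modePrefactor n)).bound
  refine ⟨C, ?_⟩
  filter_upwards [eventually_nhdsGT_zero_mul_left hscale hC, self_mem_nhdsWithin] with y hyC hy
  rw [fP_add_alphaN0_mul_sqrt_mul_K7half hn hy, ← modePrefactor_mul_div hn, ← mul_sub]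
  simpa using hyC
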